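/- arXiv:math/0601293 — 2 statements merged into one kernel-verified Lean document; each statement's English description precedes it below -/
import Mathlib

section
/- For every integer Δ ≥ 1 there exists N(Δ) such that for all n ≥ N(Δ) with Δ·n even, the number of labelled simple Δ-regular graphs on the vertex set {1,…,n} is at least (n/(3Δ))^(Δn/2). -/
/-!
Write `n = 2 (c + k)` with `c = Δ`, and build `Δ`-regular graphs by adding perfect matchings one at
a time. For `d < Δ`, count the pairs of a `d`-regular graph `G` and a `(d + 1)`-regular graph
`K ≥ G`. Every `K` contains at most `(d + 1) ^ (n / 2)` perfect matchings, while the complement of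
every `G` contains at least `2 ^ k * k !`: match vertices greedily until `2 * c` of them are left;
among these all degrees are at least `c`, so an augmentation argument completes the matching.
Hence the number `R` of `Δ`-regular graphs satisfies
`(2 ^ k * k !) ^ Δ ≤ Δ ! ^ (n / 2) * R ≤ Δ ^ (Δ * n / 2) * R`.

If `n` is odd, then `Δ = 2 * t`. From a `Δ`-regular graph on `n - 1` vertices remove `t` independent
edges and join their ends to a new vertex; the same graph arises at most `Δ ^ t` times, and `Δ ^ t`
is exactly the factor by which `Δ ^ (Δ * n / 2)` grows from `n - 1` to `n`.

Finally `2 ^ k * k !` is at least `(n / e) ^ (n / 2)` up to a factor polynomial in `n`, and `e < 3`.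
-/

open SimpleGraph Filter
open scoped Nat

theorem ncard_mul_le_ncard_mul {α β : Type*} (r : α → β → Prop) {s : Set α} {t : Set β} {m n : ℕ}
    (hs : s.Finite) (ht : t.Finite) (hm : ∀ a ∈ s, m ≤ {b ∈ t | r a b}.ncard)
    (hn : ∀ b ∈ t, {a ∈ s | r a b}.ncard ≤ n) : s.ncard * m ≤ t.ncard * n := by
  classical
  lift s to Finset α using hs
  lift t to Finset β using ht
  simp only [Set.ncard_coe_finset, Finset.mem_coe, ← Finset.coe_filter] at hm hn ⊢
  exact Finset.card_mul_le_card_mul r hm hn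

theorem ncard_sdiff_pair {α : Type*} {s : Set α} {a b : α} (ha : a ∈ s) (hb : b ∈ s)
    (hab : a ≠ b) : (s \ {a, b}).ncard = s.ncard - 2 := by
  rw [Set.ncard_sdiff (Set.pair_subset ha hb), Set.ncard_pair hab]

section GraphFactors

variable {V : Type*} {G H K : SimpleGraph V} {f g : V → ℕ}

/-- The `f`-factors of `G`: the spanning subgraphs of `G` in which every vertex `v` has degree
`f v`. They are simple graphs on `V`, rather than terms of `G.Subgraph`, so that factors of
different graphs can be added to and removed from each other by `⊔` and `\`. -/
def graphFactors (G : SimpleGraph V) (f : V → ℕ) : Set (SimpleGraph V) :=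
  {H | H ≤ G ∧ ∀ v, (H.neighborSet v).ncard = f v}

variable [Finite V]

theorem ncard_neighborSet_sdiff_add (h : K ≤ H) (v : V) :
    ((H \ K).neighborSet v).ncard + (K.neighborSet v).ncard = (H.neighborSet v).ncard := by
  rw [neighborSet_sdiff]
  exact Set.ncard_sdiff_add_ncard_of_subset fun _ hw => h hw

theorem ncard_neighborSet_sup_of_disjoint (h : Disjoint H K) (v : V) :
    ((H ⊔ K).neighborSet v).ncard = (H.neighborSet v).ncard + (K.neighborSet v).ncard := by
  rw [← ncard_neighborSet_sdiff_add le_sup_right, h.sup_sdiff_cancel_right]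

theorem sup_mem_graphFactors (hH : H ∈ graphFactors G f) (hK : K ∈ graphFactors G g)
    (h : Disjoint H K) : H ⊔ K ∈ graphFactors G (f + g) :=
  ⟨sup_le hH.1 hK.1, fun v => by
    rw [ncard_neighborSet_sup_of_disjoint h, hH.2, hK.2, Pi.add_apply]⟩

theorem sdiff_mem_graphFactors (hK : K ∈ graphFactors G (f + g)) (hH : H ∈ graphFactors G f)
    (h : H ≤ K) : K \ H ∈ graphFactors K g :=
  ⟨sdiff_le, fun v => by
    have := ncard_neighborSet_sdiff_add h v
    rw [hK.2, hH.2, Pi.add_apply] at this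
    lia⟩

theorem ncard_graphFactors_mul_le {m n : ℕ}
    (hm : ∀ H ∈ graphFactors G f, m ≤ (graphFactors (G \ H) g).ncard)
    (hn : ∀ K ∈ graphFactors G (f + g), (graphFactors K g).ncard ≤ n) :
    (graphFactors G f).ncard * m ≤ (graphFactors G (f + g)).ncard * n := by
  refine ncard_mul_le_ncard_mul (· ≤ ·) (Set.toFinite _) (Set.toFinite _) (fun H hH => ?_)
    fun K hK => ?_
  · have disjoint_factor {M} (hM : M ∈ graphFactors (G \ H) g) : Disjoint H M :=
      disjoint_sdiff_self_right.mono_right hM.1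
    refine (hm H hH).trans (Set.ncard_le_ncard_of_injOn (H ⊔ ·) (fun M hM => ?_) ?_)
    · have hMG : M ∈ graphFactors G g := ⟨hM.1.trans sdiff_le, hM.2⟩
      exact ⟨sup_mem_graphFactors hH hMG (disjoint_factor hM), le_sup_left⟩
    · intro M hM M' hM' (h : H ⊔ M = H ⊔ M')
      rw [← (disjoint_factor hM).sup_sdiff_cancel_left, h,
        (disjoint_factor hM').sup_sdiff_cancel_left]
  · refine le_trans (Set.ncard_le_ncard_of_injOn (K \ ·) (fun H hH => ?_) ?_) (hn K hK)
    · exact sdiff_mem_graphFactors hK hH.1 hH.2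
    · intro H hH H' hH' (h : K \ H = K \ H')
      rw [← sdiff_sdiff_eq_self hH.2, h, sdiff_sdiff_eq_self hH'.2]

end GraphFactors

section PerfectMatchings

variable {V : Type*} {G M N : SimpleGraph V} {U W : Set V} {u v : V} {c k m D δ : ℕ}

/-- The perfect matchings of the subgraph of `G` induced by `U`, as graphs on all of `V` in which
the vertices outside `U` are isolated. -/
def perfectMatchings (G : SimpleGraph V) (U : Set V) : Set (SimpleGraph V) :=
  graphFactors G (U.indicator 1)

theorem edge_mem_perfectMatchings (h : G.Adj u v) : edge u v ∈ perfectMatchings G {u, v} := by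
  refine ⟨(edge_le_iff G).2 (.inr h), fun w => ?_⟩
  have huv := h.ne
  by_cases hu : w = u
  · have hw : (edge u v).neighborSet w = {v} := by ext; grind [mem_neighborSet]
    rw [hw]
    simp [hu]
  by_cases hv : w = v
  · have hw : (edge u v).neighborSet w = {u} := by ext; grind [mem_neighborSet]
    rw [hw]
    simp [hv]
  · have hw : (edge u v).neighborSet w = ∅ := by ext; grind [mem_neighborSet]
    simp [hw, hu, hv]

theorem ncard_neighborSet_of_mem_perfectMatchings (hM : M ∈ perfectMatchings G U) (hu : u ∈ U) :
    (M.neighborSet u).ncard = 1 := by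
  rw [hM.2, Set.indicator_of_mem hu, Pi.one_apply]

variable [Finite V]

theorem mem_of_mem_perfectMatchings_of_adj (hM : M ∈ perfectMatchings G U) (h : M.Adj u v) :
    u ∈ U := by
  have h₁ : 0 < (M.neighborSet u).ncard := (Set.ncard_pos).2 ⟨v, h⟩
  rw [hM.2] at h₁
  exact Set.mem_of_indicator_ne_zero h₁.ne'

theorem disjoint_of_mem_perfectMatchings (hM : M ∈ perfectMatchings G U)
    (hN : N ∈ perfectMatchings G W) (h : Disjoint U W) : Disjoint M N :=
  disjoint_neighborSet.1 fun _ => Set.disjoint_left.2 fun _ h₁ h₂ =>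
    Set.disjoint_left.1 h (mem_of_mem_perfectMatchings_of_adj hM h₁)
      (mem_of_mem_perfectMatchings_of_adj hN h₂)

theorem sup_mem_perfectMatchings (hM : M ∈ perfectMatchings G U) (hN : N ∈ perfectMatchings G W)
    (h : Disjoint U W) : M ⊔ N ∈ perfectMatchings G (U ∪ W) := by
  rw [perfectMatchings, Set.indicator_union_of_disjoint h]
  exact sup_mem_graphFactors hM hN (disjoint_of_mem_perfectMatchings hM hN h)

theorem sdiff_mem_perfectMatchings (hM : M ∈ perfectMatchings G U)
    (hN : N ∈ perfectMatchings G W) (h : N ≤ M) : M \ N ∈ perfectMatchings G (U \ W) := by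
  refine ⟨sdiff_le.trans hM.1, fun v => ?_⟩
  have h₁ := ncard_neighborSet_sdiff_add h v
  rw [hM.2, hN.2] at h₁
  by_cases hU : v ∈ U <;> by_cases hW : v ∈ W <;> simp_all

theorem ncard_perfectMatchings_adj (h : G.Adj u v) (hu : u ∈ U) (hv : v ∈ U) :
    {M ∈ perfectMatchings G U | M.Adj u v}.ncard = (perfectMatchings G (U \ {u, v})).ncard := by
  have he := edge_mem_perfectMatchings h
  have edge_le {M : SimpleGraph V} (hM : M.Adj u v) : edge u v ≤ M := (edge_le_iff M).2 (.inr hM)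
  refine Set.BijOn.ncard_eq (f := (· \ edge u v)) ⟨fun M hM => ?_, fun M hM M' hM' hMM' => ?_,
    fun N hN => ⟨N ⊔ edge u v, ⟨?_, ?_⟩, ?_⟩⟩
  · exact sdiff_mem_perfectMatchings hM.1 he (edge_le hM.2)
  · rw [← sdiff_sup_cancel (edge_le hM.2), ← sdiff_sup_cancel (edge_le hM'.2)]
    exact congrArg (· ⊔ edge u v) hMM'
  · simpa [Set.sdiff_union_of_subset (Set.pair_subset hu hv)]
      using sup_mem_perfectMatchings hN he Set.disjoint_sdiff_left
  · exact .inr (by simp [edge_adj, h.ne])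
  · exact (disjoint_of_mem_perfectMatchings hN he Set.disjoint_sdiff_left).sup_sdiff_cancel_right

theorem ncard_neighborSet_inter_mul_le_ncard_perfectMatchings (hu : u ∈ U)
    (h : ∀ v ∈ G.neighborSet u ∩ U, m ≤ (perfectMatchings G (U \ {u, v})).ncard) :
    (G.neighborSet u ∩ U).ncard * m ≤ (perfectMatchings G U).ncard := by
  rw [← mul_one (perfectMatchings G U).ncard]
  refine ncard_mul_le_ncard_mul (fun v M => M.Adj u v) (Set.toFinite _) (Set.toFinite _)
    (fun v hv => ?_) fun M hM => ?_
  · rw [ncard_perfectMatchings_adj hv.1 hu hv.2]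
    exact h v hv
  · rw [← ncard_neighborSet_of_mem_perfectMatchings hM hu]
    exact Set.ncard_le_ncard fun v hv => hv.2

theorem ncard_perfectMatchings_le_ncard_neighborSet_inter_mul (hu : u ∈ U)
    (h : ∀ v ∈ G.neighborSet u ∩ U, (perfectMatchings G (U \ {u, v})).ncard ≤ m) :
    (perfectMatchings G U).ncard ≤ (G.neighborSet u ∩ U).ncard * m := by
  rw [← mul_one (perfectMatchings G U).ncard]
  refine ncard_mul_le_ncard_mul (fun M v => M.Adj u v) (Set.toFinite _) (Set.toFinite _)
    (fun M hM => ?_) fun v hv => ?_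
  · rw [← ncard_neighborSet_of_mem_perfectMatchings hM hu]
    exact Set.ncard_le_ncard fun v hv =>
      ⟨⟨hM.1 hv, mem_of_mem_perfectMatchings_of_adj hM hv.symm⟩, hv⟩
  · rw [ncard_perfectMatchings_adj hv.1 hu hv.2]
    exact h v hv

theorem ncard_perfectMatchings_le_pow (hU : U.ncard = 2 * m)
    (hD : ∀ u ∈ U, (G.neighborSet u ∩ U).ncard ≤ D) : (perfectMatchings G U).ncard ≤ D ^ m := by
  induction m generalizing U with
  | zero =>
    obtain rfl : U = ∅ := (Set.ncard_eq_zero).1 hU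
    refine (Set.ncard_le_one).2 fun M hM N hN => ?_
    ext x y
    exact iff_of_false (fun h => mem_of_mem_perfectMatchings_of_adj hM h)
      fun h => mem_of_mem_perfectMatchings_of_adj hN h
  | succ m ih =>
    obtain ⟨u, hu⟩ : U.Nonempty := Set.nonempty_of_ncard_ne_zero (by lia)
    calc (perfectMatchings G U).ncard ≤ (G.neighborSet u ∩ U).ncard * D ^ m := by
          refine ncard_perfectMatchings_le_ncard_neighborSet_inter_mul hu fun v hv =>
            ih ?_ fun w hw => ?_
          · rw [ncard_sdiff_pair hu hv.2 (G.ne_of_adj hv.1), hU]; lia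
          · exact (Set.ncard_le_ncard (Set.inter_subset_inter_right _ Set.sdiff_subset)).trans
              (hD w hw.1)
      _ ≤ D ^ (m + 1) := by
          rw [pow_succ']
          exact Nat.mul_le_mul_right _ (hD u hu)

theorem exists_adj_of_ncard_lt_ncard_add_ncard {A B : Set V} (hM : M ∈ perfectMatchings G W)
    (hA : A ⊆ W) (hB : B ⊆ W) (h : W.ncard < A.ncard + B.ncard) :
    ∃ x ∈ A, ∃ y ∈ B, M.Adj x y := by
  let P : Set V := {y | ∃ x ∈ A, M.Adj x y}
  have hPW : P ⊆ W := fun y ⟨x, _, hxy⟩ => mem_of_mem_perfectMatchings_of_adj hM hxy.symm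
  have hAP : A.ncard * 1 ≤ P.ncard * 1 := by
    refine ncard_mul_le_ncard_mul M.Adj (Set.toFinite _) (Set.toFinite _) (fun x hx => ?_)
      fun y hy => ?_
    · rw [← ncard_neighborSet_of_mem_perfectMatchings hM (hA hx)]
      exact Set.ncard_le_ncard fun y hy => ⟨⟨x, hx, hy⟩, hy⟩
    · rw [← ncard_neighborSet_of_mem_perfectMatchings hM (hPW hy)]
      exact Set.ncard_le_ncard fun x hx => hx.2.symm
  obtain ⟨y, ⟨x, hx, hxy⟩, hy⟩ : (P ∩ B).Nonempty := by
    rw [← Set.ncard_pos]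
    have := Set.ncard_union_add_ncard_inter P B
    have := Set.ncard_le_ncard (Set.union_subset hPW hB)
    lia
  exact ⟨x, hx, y, hy, hxy⟩

theorem sup_edge_mem_perfectMatchings (hM : M ∈ perfectMatchings G W) (h : G.Adj u v)
    (hu : u ∉ W) (hv : v ∉ W) : M ⊔ edge u v ∈ perfectMatchings G (W ∪ {u, v}) :=
  sup_mem_perfectMatchings hM (edge_mem_perfectMatchings h) (by simp [hu, hv])

theorem exists_perfectMatchings_union_pair_nonempty (hM : M ∈ perfectMatchings G W)
    (hδ : ∀ u ∈ U, δ ≤ (G.neighborSet u ∩ U).ncard) (hW : W.ncard < 2 * δ)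
    (hu : u ∈ U \ W) (hv : v ∈ U \ W) (huv : u ≠ v) :
    ∃ x ∈ U \ W, ∃ y ∈ U \ W, x ≠ y ∧ (perfectMatchings G (W ∪ {x, y})).Nonempty := by
  by_cases! h : ∃ x ∈ U \ W, ∃ y ∈ U \ W, G.Adj x y
  · obtain ⟨x, hx, y, hy, hxy⟩ := h
    exact ⟨x, hx, y, hy, hxy.ne, _, sup_edge_mem_perfectMatchings hM hxy hx.2 hy.2⟩
  have neighbors_subset {x} (hx : x ∈ U \ W) : G.neighborSet x ∩ U ⊆ W := fun y hy => by
    by_contra hyW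
    exact h x hx y ⟨hy.2, hyW⟩ hy.1
  -- Now `u` and `v` have all their neighbors in `W`, and counting these yields an edge `xy` of `M`
  -- along an alternating path `u x y v`.
  obtain ⟨x, ⟨hux, -⟩, y, ⟨hvy, -⟩, hxy⟩ := exists_adj_of_ncard_lt_ncard_add_ncard hM
    (neighbors_subset hu) (neighbors_subset hv) (by grind)
  have hx := mem_of_mem_perfectMatchings_of_adj hM hxy
  have hy := mem_of_mem_perfectMatchings_of_adj hM hxy.symm
  have hxy' := hxy.ne
  have hM₁ := sdiff_mem_perfectMatchings hM (edge_mem_perfectMatchings (hM.1 hxy))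
    ((edge_le_iff M).2 (.inr hxy))
  have hM₂ := sup_edge_mem_perfectMatchings hM₁ hux (by grind) (by grind)
  have hM₃ := sup_edge_mem_perfectMatchings hM₂ hvy (by grind) (by grind)
  have hW' : W \ {x, y} ∪ {u, x} ∪ {v, y} = W ∪ {u, v} := by grind
  exact ⟨u, hu, v, hv, huv, _, hW' ▸ hM₃⟩

theorem exists_ncard_eq_perfectMatchings_nonempty (hδ : ∀ u ∈ U, δ ≤ (G.neighborSet u ∩ U).ncard)
    (hk : k ≤ δ) (hU : 2 * k ≤ U.ncard) :
    ∃ W ⊆ U, W.ncard = 2 * k ∧ (perfectMatchings G W).Nonempty := by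
  induction k with
  | zero => exact ⟨∅, by simp, by simp, ⊥, bot_le, by simp⟩
  | succ k ih =>
    obtain ⟨W, hWU, hW, M, hM⟩ := ih (by lia) (by lia)
    obtain ⟨u, hu, v, hv, huv⟩ : ∃ u ∈ U \ W, ∃ v ∈ U \ W, u ≠ v := by
      refine (Set.one_lt_ncard).1 ?_
      rw [Set.ncard_sdiff hWU]
      lia
    obtain ⟨x, hx, y, hy, hxy, hne⟩ :=
      exists_perfectMatchings_union_pair_nonempty hM hδ (by lia) hu hv huv
    refine ⟨W ∪ {x, y}, Set.union_subset hWU (Set.pair_subset hx.1 hy.1), ?_, hne⟩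
    rw [Set.ncard_union_eq (by simp [hx.2, hy.2]), Set.ncard_pair hxy]
    lia

theorem two_pow_mul_factorial_le_ncard_perfectMatchings (hU : U.ncard = 2 * (c + k))
    (hc : ∀ u ∈ U, (U \ G.neighborSet u).ncard ≤ c) :
    2 ^ k * k ! ≤ (perfectMatchings G U).ncard := by
  have le_ncard_neighbors {U : Set V} {k u} (hU : U.ncard = 2 * (c + k))
      (hu : (U \ G.neighborSet u).ncard ≤ c) : c + 2 * k ≤ (G.neighborSet u ∩ U).ncard := by
    have := Set.ncard_inter_add_ncard_sdiff_eq_ncard U (G.neighborSet u)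
    rw [Set.inter_comm] at this
    lia
  induction k generalizing U with
  | zero =>
    obtain ⟨W, hWU, hW, hne⟩ := exists_ncard_eq_perfectMatchings_nonempty (k := c)
      (fun u hu => le_ncard_neighbors hU (hc u hu)) le_rfl (by lia)
    obtain rfl := Set.eq_of_subset_of_ncard_le hWU (by lia)
    rw [pow_zero, Nat.factorial_zero, mul_one]
    exact (Set.ncard_pos).2 hne
  | succ k ih =>
    obtain ⟨u, hu⟩ : U.Nonempty := Set.nonempty_of_ncard_ne_zero (by lia)
    calc 2 ^ (k + 1) * (k + 1)! = 2 * (k + 1) * (2 ^ k * k !) := by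
          rw [Nat.factorial_succ]; ring
      _ ≤ (G.neighborSet u ∩ U).ncard * (2 ^ k * k !) :=
          Nat.mul_le_mul_right _ (by have := le_ncard_neighbors hU (hc u hu); lia)
      _ ≤ (perfectMatchings G U).ncard := by
          refine ncard_neighborSet_inter_mul_le_ncard_perfectMatchings hu fun v hv =>
            ih ?_ fun w hw => ?_
          · rw [ncard_sdiff_pair hu hv.2 (G.ne_of_adj hv.1), hU]; lia
          · exact (Set.ncard_le_ncard (Set.sdiff_subset_sdiff_left Set.sdiff_subset)).trans
              (hc w hw.1)

end PerfectMatchings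

section RegularGraphs

variable {V W : Type*} {G M : SimpleGraph V} {S : Set V} {c d k t Δ : ℕ}

/-- The `d`-regular graphs on the vertex set `V`, with degrees counted by `Set.ncard` instead of
`SimpleGraph.degree`, which would need every neighbor set to be a `Fintype`. -/
def regularGraphs (V : Type*) (d : ℕ) : Set (SimpleGraph V) :=
  {G | ∀ v, (G.neighborSet v).ncard = d}

theorem regularGraphs_eq_graphFactors_top (V : Type*) (d : ℕ) :
    regularGraphs V d = graphFactors ⊤ fun _ => d := by
  simp [regularGraphs, graphFactors]

theorem ncard_regularGraphs_congr (e : V ≃ W) (d : ℕ) :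
    (regularGraphs V d).ncard = (regularGraphs W d).ncard := by
  have ncard_neighborSet (G : SimpleGraph V) (w : W) :
      ((e.simpleGraph G).neighborSet w).ncard = (G.neighborSet (e.symm w)).ncard :=
    congrArg ENat.toNat (Set.encard_preimage_of_bijective e.symm.bijective _)
  refine Nat.card_congr (e.simpleGraph.subtypeEquiv fun G => ?_)
  exact (e.symm.forall_congr fun w => by rw [ncard_neighborSet]).symm

/-- The graph obtained from `G` by adding a vertex `none` whose neighbors are the vertices
in `S`. -/
def addVertex (G : SimpleGraph V) (S : Set V) : SimpleGraph (Option V) where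
  Adj
    | none, none => False
    | none, some x => x ∈ S
    | some x, none => x ∈ S
    | some x, some y => G.Adj x y
  symm.symm := by
    rintro (_ | x) (_ | y) h
    exacts [h, h, h, G.adj_symm h]
  loopless.irrefl := by
    rintro (_ | x) h
    exacts [h, G.irrefl h]

theorem neighborSet_addVertex_none (G : SimpleGraph V) (S : Set V) :
    (addVertex G S).neighborSet none = some '' S := by
  ext (_ | x) <;> simp [addVertex]

variable [Finite V]

theorem ncard_neighborSet_addVertex_some (G : SimpleGraph V) (S : Set V) (x : V) :
    ((addVertex G S).neighborSet (some x)).ncard = (G.neighborSet x).ncard + S.indicator 1 x := by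
  by_cases hx : x ∈ S
  · have h : (addVertex G S).neighborSet (some x) = insert none (some '' G.neighborSet x) := by
      ext (_ | y) <;> simp [addVertex, hx]
    rw [h, Set.ncard_insert_of_notMem (by simp), Set.ncard_image_of_injective _
      (Option.some_injective V), Set.indicator_of_mem hx, Pi.one_apply]
  · have h : (addVertex G S).neighborSet (some x) = some '' G.neighborSet x := by
      ext (_ | y) <;> simp [addVertex, hx]
    rw [h, Set.ncard_image_of_injective _ (Option.some_injective V),
      Set.indicator_of_notMem hx, add_zero]

theorem addVertex_sdiff_mem_regularGraphs (hG : G ∈ regularGraphs V d)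
    (hM : M ∈ perfectMatchings G S) (hS : S.ncard = d) :
    addVertex (G \ M) S ∈ regularGraphs (Option V) d
  | none => by
    rw [neighborSet_addVertex_none, Set.ncard_image_of_injective _ (Option.some_injective V), hS]
  | some x => by
    rw [ncard_neighborSet_addVertex_some, ← hM.2, ncard_neighborSet_sdiff_add hM.1, hG]

theorem ncard_regularGraphs_mul_le (hV : Nat.card V = 2 * (c + k)) (hd : d + 1 ≤ c) :
    (regularGraphs V d).ncard * (2 ^ k * k !) ≤
      (regularGraphs V (d + 1)).ncard * (d + 1) ^ (c + k) := by
  have hf : (fun _ : V => d + 1) = (fun _ => d) + Set.univ.indicator 1 := by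
    ext; simp
  rw [regularGraphs_eq_graphFactors_top, regularGraphs_eq_graphFactors_top, hf]
  refine ncard_graphFactors_mul_le (fun G hG => ?_) fun K hK => ?_
  · refine two_pow_mul_factorial_le_ncard_perfectMatchings (by rwa [Set.ncard_univ]) fun v _ => ?_
    have h : Set.univ \ (⊤ \ G).neighborSet v = insert v (G.neighborSet v) := by
      ext w
      simp only [top_sdiff', hnot_eq_compl, Set.mem_sdiff, Set.mem_univ, mem_neighborSet,
        compl_adj, Set.mem_insert_iff]
      grind
    rw [h]
    exact (Set.ncard_insert_le _ _).trans (by rw [hG.2]; exact hd)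
  · refine ncard_perfectMatchings_le_pow (by rwa [Set.ncard_univ]) fun v _ => ?_
    rw [Set.inter_univ, hK.2]
    simp

theorem pow_le_factorial_pow_mul_ncard_regularGraphs (hV : Nat.card V = 2 * (c + k))
    (hd : d ≤ c) : (2 ^ k * k !) ^ d ≤ d ! ^ (c + k) * (regularGraphs V d).ncard := by
  induction d with
  | zero =>
    have h : (⊥ : SimpleGraph V) ∈ regularGraphs V 0 := by simp [regularGraphs]
    rw [pow_zero, Nat.factorial_zero, one_pow, one_mul]
    exact (Set.ncard_pos).2 ⟨_, h⟩
  | succ d ih =>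
    calc (2 ^ k * k !) ^ (d + 1)
        ≤ d ! ^ (c + k) * (regularGraphs V d).ncard * (2 ^ k * k !) := by
          rw [pow_succ]
          exact Nat.mul_le_mul_right _ (ih (by lia))
      _ ≤ d ! ^ (c + k) * ((regularGraphs V (d + 1)).ncard * (d + 1) ^ (c + k)) := by
          rw [mul_assoc]
          exact Nat.mul_le_mul_left _ (ncard_regularGraphs_mul_le hV hd)
      _ = (d + 1)! ^ (c + k) * (regularGraphs V (d + 1)).ncard := by
          rw [Nat.factorial_succ, mul_pow]
          ring

theorem ncard_regularGraphs_le_ncard_regularGraphs_option_mul (ht : 2 * t ≤ Nat.card V) :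
    (regularGraphs V (2 * t)).ncard ≤ (regularGraphs (Option V) (2 * t)).ncard * (2 * t) ^ t := by
  rw [← mul_one (regularGraphs V (2 * t)).ncard]
  refine ncard_mul_le_ncard_mul
    (fun G K => ∃ S, ∃ M ∈ perfectMatchings G S, addVertex (G \ M) S = K)
    (Set.toFinite _) (Set.toFinite _) (fun G hG => ?_) fun K hK => ?_
  · obtain ⟨S, -, hS, M, hM⟩ := exists_ncard_eq_perfectMatchings_nonempty (G := G) (U := Set.univ)
      (δ := 2 * t) (k := t) (by simp [hG _]) (by lia) (by rwa [Set.ncard_univ])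
    exact (Set.ncard_pos).2 ⟨_, addVertex_sdiff_mem_regularGraphs hG hM hS, S, M, hM, rfl⟩
  · let S : Set V := {x | K.Adj none (some x)}
    have hS : S.ncard = 2 * t := by
      rw [← hK none, ← Set.ncard_image_of_injective S (Option.some_injective V)]
      congr 1
      ext (_ | x) <;> simp [S]
    have hsub : {G ∈ regularGraphs V (2 * t) | ∃ S, ∃ M ∈ perfectMatchings G S,
        addVertex (G \ M) S = K} ⊆ (K.comap some ⊔ ·) '' perfectMatchings ⊤ S := by
      rintro G ⟨-, T, M, hM, rfl⟩
      exact ⟨M, ⟨le_top, hM.2⟩, sdiff_sup_cancel hM.1⟩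
    calc _ ≤ ((K.comap some ⊔ ·) '' perfectMatchings ⊤ S).ncard := Set.ncard_le_ncard hsub
      _ ≤ (perfectMatchings ⊤ S).ncard := Set.ncard_image_le
      _ ≤ (2 * t) ^ t := ncard_perfectMatchings_le_pow hS fun x _ =>
          (Set.ncard_le_ncard Set.inter_subset_right).trans_eq hS

theorem pow_le_pow_mul_ncard_regularGraphs_of_card_eq (hV : Nat.card V = 2 * (Δ + k)) :
    (2 ^ k * k !) ^ Δ ≤ Δ ^ (Δ * (Δ + k)) * (regularGraphs V Δ).ncard := by
  refine (pow_le_factorial_pow_mul_ncard_regularGraphs hV le_rfl).trans ?_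
  rw [pow_mul]
  gcongr
  exact Δ.factorial_le_pow

theorem pow_le_pow_mul_ncard_regularGraphs_option (hV : Nat.card V = 2 * (2 * t + k)) :
    (2 ^ k * k !) ^ (2 * t) ≤
      (2 * t) ^ (2 * t * (2 * t + k) + t) * (regularGraphs (Option V) (2 * t)).ncard := by
  calc (2 ^ k * k !) ^ (2 * t)
      ≤ (2 * t) ^ (2 * t * (2 * t + k)) * (regularGraphs V (2 * t)).ncard :=
        pow_le_pow_mul_ncard_regularGraphs_of_card_eq hV
    _ ≤ (2 * t) ^ (2 * t * (2 * t + k)) *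
          ((regularGraphs (Option V) (2 * t)).ncard * (2 * t) ^ t) :=
        Nat.mul_le_mul_left _
          (ncard_regularGraphs_le_ncard_regularGraphs_option_mul (by lia))
    _ = _ := by ring

theorem pow_le_pow_mul_ncard_regularGraphs (hΔ : Even (Δ * Nat.card V))
    (hV : Nat.card V / 2 = Δ + k) :
    (2 ^ k * k !) ^ Δ ≤ Δ ^ (Δ * Nat.card V / 2) * (regularGraphs V Δ).ncard := by
  rcases Nat.even_or_odd' (Nat.card V) with ⟨m, hm | hm⟩
  · rw [Nat.mul_div_assoc _ ⟨m, hm⟩, hV]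
    exact pow_le_pow_mul_ncard_regularGraphs_of_card_eq (by lia)
  · obtain ⟨t, rfl⟩ : 2 ∣ Δ :=
      ((Nat.even_mul.1 hΔ).resolve_right (hm ▸ Nat.not_even_two_mul_add_one m)).two_dvd
    obtain rfl : m = 2 * t + k := by lia
    have hexp : 2 * t * Nat.card V / 2 = 2 * t * (2 * t + k) + t := by
      rw [hm, mul_assoc, Nat.mul_div_cancel_left _ two_pos]
      ring
    rw [hexp, ncard_regularGraphs_congr ((Finite.equivFinOfCardEq hm).trans (finSuccEquiv _))]
    exact pow_le_pow_mul_ncard_regularGraphs_option (Nat.card_fin _)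

end RegularGraphs

section Asymptotics

theorem eventually_pow_le_two_mul_div_exp_pow (s : ℕ) : ∀ᶠ m : ℕ in atTop,
    ((2 * m + 1 : ℝ) / 3) ^ (m + 1) * (2 * m) ^ s ≤ (2 * m / Real.exp 1) ^ m := by
  have one_lt_ratio : 1 < 3 / Real.exp 1 := by
    rw [one_lt_div (Real.exp_pos 1)]
    exact Real.exp_one_lt_three
  have h := (tendsto_pow_const_div_const_pow_of_one_lt (s + 1) one_lt_ratio).eventually_le_const
    (show (0 : ℝ) < 1 / 3 ^ (s + 1) by positivity)
  filter_upwards [h, eventually_ge_atTop 1] with m hpoly hm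
  have hm : (1 : ℝ) ≤ m := by exact_mod_cast hm
  rw [div_le_div_iff₀ (by positivity) (by positivity), one_mul, ← mul_pow] at hpoly
  have two_mul_add_one_pow_le : (2 * m + 1 : ℝ) ^ m ≤ (2 * m) ^ m * 3 := by
    calc (2 * m + 1 : ℝ) ^ m ≤ (2 * m * Real.exp (1 / m)) ^ m := by
          gcongr
          have := Real.add_one_le_exp (1 / m : ℝ)
          calc (2 * m + 1 : ℝ) ≤ 2 * m * (1 / m + 1) := by field_simp; linarith
            _ ≤ _ := by gcongr
      _ = (2 * m) ^ m * Real.exp 1 := by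
          rw [mul_pow, ← Real.exp_nat_mul, mul_one_div_cancel (by positivity)]
      _ ≤ (2 * m) ^ m * 3 := by gcongr; exact Real.exp_one_lt_three.le
  calc ((2 * m + 1 : ℝ) / 3) ^ (m + 1) * (2 * m) ^ s
      = (2 * m + 1) ^ m / 3 ^ m * ((2 * m + 1) / 3 * (2 * m) ^ s) := by
        rw [pow_succ, div_pow, mul_assoc]
    _ ≤ (2 * m) ^ m * 3 / 3 ^ m * (m * (m * 3) ^ s) := by gcongr ?_ / _ * (?_ * ?_ ^ _) <;> linarith
    _ = (2 * m / 3) ^ m * (m * 3) ^ (s + 1) := by rw [div_pow]; ring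
    _ ≤ (2 * m / 3) ^ m * (3 / Real.exp 1) ^ m := by gcongr
    _ = (2 * m / Real.exp 1) ^ m := by
        rw [← mul_pow]
        congr 1
        field_simp

theorem two_mul_div_exp_pow_le_two_pow_mul_factorial (m : ℕ) :
    (2 * m / Real.exp 1) ^ m ≤ 2 ^ m * (m ! : ℝ) := by
  have := Real.pow_div_factorial_le_exp _ m.cast_nonneg m
  rw [div_le_iff₀ (by positivity)] at this
  rw [mul_div_assoc, mul_pow, div_pow, ← Real.exp_nat_mul, mul_one]
  gcongr
  rwa [div_le_iff₀' (Real.exp_pos _)]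

theorem two_pow_mul_factorial_le_mul_pow {s m : ℕ} (h : s ≤ m) :
    2 ^ m * m ! ≤ 2 ^ (m - s) * (m - s)! * (2 * m) ^ s := by
  calc 2 ^ m * m ! = 2 ^ (m - s) * (m - s)! * (2 ^ s * m.descFactorial s) := by
        rw [← Nat.factorial_mul_descFactorial h, ← pow_sub_mul_pow 2 h]
        ring
    _ ≤ 2 ^ (m - s) * (m - s)! * (2 * m) ^ s := by
        rw [mul_pow]
        gcongr
        exact m.descFactorial_le_pow s

theorem eventually_pow_le_two_pow_mul_factorial (s : ℕ) : ∀ᶠ n : ℕ in atTop,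
    ((n : ℝ) / 3) ^ (n / 2 + 1) ≤ 2 ^ (n / 2 - s) * (n / 2 - s)! := by
  have h := (eventually_pow_le_two_mul_div_exp_pow s).and (eventually_ge_atTop (max s 1))
  filter_upwards [(Nat.tendsto_div_const_atTop two_ne_zero).eventually h] with n ⟨hexp, hs⟩
  set m := n / 2
  have hnm : (n : ℝ) ≤ 2 * m + 1 := by exact_mod_cast (by lia : n ≤ 2 * m + 1)
  have hm0 : (0 : ℝ) < m := by exact_mod_cast (by lia : 0 < m)
  have hfact : (2 : ℝ) ^ m * m ! ≤ 2 ^ (m - s) * (m - s)! * (2 * m) ^ s := by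
    exact_mod_cast two_pow_mul_factorial_le_mul_pow (by lia)
  refine le_of_mul_le_mul_right ?_ (show (0 : ℝ) < (2 * m) ^ s by positivity)
  calc ((n : ℝ) / 3) ^ (m + 1) * (2 * m) ^ s
      ≤ ((2 * m + 1) / 3) ^ (m + 1) * (2 * m) ^ s := by gcongr
    _ ≤ (2 * m / Real.exp 1) ^ m := hexp
    _ ≤ 2 ^ m * m ! := two_mul_div_exp_pow_le_two_pow_mul_factorial m
    _ ≤ 2 ^ (m - s) * (m - s)! * (2 * m) ^ s := hfact

end Asymptotics

/-- For every `Δ ≥ 1` and all sufficiently large `n` with `Δ * n` even, the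
number of labelled simple `Δ`-regular graphs on the vertex set `{1, …, n}` is
at least `(n / (3Δ)) ^ (Δn / 2)`. -/
theorem card_regular_graphs_ge (Δ : ℕ) (hΔ : 1 ≤ Δ) :
    ∃ N : ℕ, ∀ n : ℕ, N ≤ n → Even (Δ * n) →
      ((n : ℝ) / (3 * Δ)) ^ (Δ * n / 2) ≤
        ({G : SimpleGraph (Fin n) | ∀ v, (G.neighborSet v).ncard = Δ} : Set (SimpleGraph (Fin n))).ncard := by
  obtain ⟨N, hN⟩ := eventually_atTop.1 (eventually_pow_le_two_pow_mul_factorial Δ)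
  refine ⟨max N (max (2 * Δ) 3), fun n hn heven => ?_⟩
  change _ ≤ ((regularGraphs (Fin n) Δ).ncard : ℝ)
  have hn3 : (1 : ℝ) ≤ n / 3 := by
    rw [one_le_div three_pos]
    exact_mod_cast (by lia : 3 ≤ n)
  have hcount := pow_le_pow_mul_ncard_regularGraphs (V := Fin n) (k := n / 2 - Δ)
    (by rwa [Nat.card_fin]) (by rw [Nat.card_fin]; lia)
  rw [Nat.card_fin] at hcount
  have hexp : Δ * n / 2 ≤ (n / 2 + 1) * Δ := by
    have : n ≤ 2 * (n / 2 + 1) := by lia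
    exact Nat.div_le_of_le_mul (by nlinarith)
  rw [← div_div, div_pow, div_le_iff₀' (by positivity)]
  calc ((n : ℝ) / 3) ^ (Δ * n / 2) ≤ ((n / 3) ^ (n / 2 + 1)) ^ Δ := by
        rw [← pow_mul]
        exact pow_le_pow_right₀ hn3 hexp
    _ ≤ (2 ^ (n / 2 - Δ) * (n / 2 - Δ)!) ^ Δ := by
        gcongr
        exact hN n (by lia)
    _ ≤ Δ ^ (Δ * n / 2) * (regularGraphs (Fin n) Δ).ncard := by exact_mod_cast hcount
end

section
/- There is an absolute constant c > 0 such that for every positive integer n, the number g(n) of queues on the vertex set {1,…,n} satisfies g(n) ≤ c^n (in particular one may take c = 121, i.e. g(n) ≤ 11^(2n)). -/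
/-!
Two edges are nested exactly when they are incomparable in the product order on `ℕ × ℕ`, so a queue
is a finite chain in the grid `{1, …, n} × {1, …, n}`. A chain in an `(a + 1) × (b + 1)` grid,
stripped of the top corner, cannot meet both the last row and the last column, so it is a chain in
one of the two grids with a row or a column removed. The numbers `f(a, b)` of chains therefore
satisfy `f(a + 1, b + 1) ≤ 2 (f(a, b + 1) + f(a + 1, b))` with `f(a, 0) = f(0, b) = 1`, and Pascal's
rule turns this into `f(a, b) ≤ 2 ^ (a + b) * (a + b).choose a`. For `a = b = n` both factors are at
most `4 ^ n`.
-/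

/-- Two edges `(v,w)` and `(x,y)` (each with first coordinate ≤ second) of an
ordered graph are nested (one is nested inside the other). -/
def Nested (e f : ℕ × ℕ) : Prop :=
  (e.1 < f.1 ∧ f.2 < e.2) ∨ (f.1 < e.1 ∧ e.2 < f.2)

/-- `E` is the edge set of an ordered graph on the vertex set `{1, …, n}`:
each edge is a pair `(v,w)` with `1 ≤ v ≤ w ≤ n` (loops allowed, no parallel edges). -/
def IsOrderedGraph (n : ℕ) (E : Finset (ℕ × ℕ)) : Prop :=
  ∀ e ∈ E, 1 ≤ e.1 ∧ e.1 ≤ e.2 ∧ e.2 ≤ n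

/-- An edge set is a queue if no two of its edges are nested. -/
def IsQueue (E : Finset (ℕ × ℕ)) : Prop :=
  ∀ e ∈ E, ∀ f ∈ E, ¬ Nested e f

/-- An edge set is a `k`-queue if it can be partitioned into at most `k` parts,
each of which is a queue. -/
def IsKQueue (k : ℕ) (E : Finset (ℕ × ℕ)) : Prop :=
  ∃ parts : Fin k → Finset (ℕ × ℕ),
    (∀ e ∈ E, ∃ i, e ∈ parts i) ∧
    (∀ i, parts i ⊆ E) ∧
    (∀ i j, i ≠ j → Disjoint (parts i) (parts j)) ∧
    (∀ i, IsQueue (parts i))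


/-- `queueCount n` is the number `g(n)` of queues on the vertex set `{1, …, n}`,
i.e. the number of edge sets `E ⊆ {(v,w) : 1 ≤ v ≤ w ≤ n}` with no two nested edges. -/
noncomputable def queueCount (n : ℕ) : ℕ :=
  {E : Finset (ℕ × ℕ) | IsOrderedGraph n E ∧ IsQueue E}.ncard

open scoped Finset

section Chains

variable {γ : Type*} [LE γ]

open Classical in
/-- The finite set of all chains contained in `P`, as the family to be counted. Chains are taken
with respect to `≤`, and the empty chain is included. -/
noncomputable def chains (P : Finset γ) : Finset (Finset γ) :=
  {C ∈ P.powerset | IsChain (· ≤ ·) (C : Set γ)}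

lemma mem_chains {P C : Finset γ} : C ∈ chains P ↔ C ⊆ P ∧ IsChain (· ≤ ·) (C : Set γ) := by
  simp only [chains, Finset.mem_filter, Finset.mem_powerset]

lemma chains_empty : chains (∅ : Finset γ) = {∅} := by
  ext C
  simp +contextual [mem_chains, Finset.subset_empty]

variable [DecidableEq γ]

lemma chains_insert_subset (p : γ) (P : Finset γ) :
    chains (insert p P) ⊆ chains P ∪ (chains P).image (insert p) := by
  intro C hC
  obtain ⟨hCP, hchain⟩ := mem_chains.1 hC
  have herase : C.erase p ∈ chains P :=
    mem_chains.2 ⟨Finset.subset_insert_iff.1 hCP, hchain.mono (C.erase_subset p)⟩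
  by_cases hp : p ∈ C
  · exact Finset.mem_union_right _
      (Finset.mem_image.2 ⟨C.erase p, herase, Finset.insert_erase hp⟩)
  · exact Finset.mem_union_left _ (Finset.erase_eq_of_notMem hp ▸ herase)

lemma card_chains_insert_le (p : γ) (P : Finset γ) :
    #(chains (insert p P)) ≤ 2 * #(chains P) :=
  calc #(chains (insert p P))
    _ ≤ #(chains P ∪ (chains P).image (insert p)) :=
        Finset.card_le_card (chains_insert_subset p P)
    _ ≤ #(chains P) + #((chains P).image (insert p)) := Finset.card_union_le _ _
    _ ≤ #(chains P) + #(chains P) := Nat.add_le_add_left Finset.card_image_le _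
    _ = 2 * #(chains P) := (two_mul _).symm

lemma chains_union_subset {P Q : Finset γ}
    (h : ∀ x ∈ P \ Q, ∀ y ∈ Q \ P, IncompRel (· ≤ ·) x y) :
    chains (P ∪ Q) ⊆ chains P ∪ chains Q := by
  intro C hC
  obtain ⟨hCPQ, hchain⟩ := mem_chains.1 hC
  suffices C ⊆ P ∨ C ⊆ Q from
    Finset.mem_union.2 (this.imp (mem_chains.2 ⟨·, hchain⟩) (mem_chains.2 ⟨·, hchain⟩))
  by_contra! hsub
  obtain ⟨y, hyC, hyP⟩ := Finset.not_subset.1 hsub.1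
  obtain ⟨x, hxC, hxQ⟩ := Finset.not_subset.1 hsub.2
  have hxP : x ∈ P := (Finset.mem_union.1 (hCPQ hxC)).resolve_right hxQ
  have hyQ : y ∈ Q := (Finset.mem_union.1 (hCPQ hyC)).resolve_left hyP
  have hincomp : IncompRel (· ≤ ·) x y :=
    h x (Finset.mem_sdiff.2 ⟨hxP, hxQ⟩) y (Finset.mem_sdiff.2 ⟨hyQ, hyP⟩)
  have hxy : x ≠ y := fun hxy => hyP (hxy ▸ hxP)
  exact (hchain hxC hyC hxy).elim hincomp.1 hincomp.2

end Chains

section Grid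

variable {α β : Type*}

lemma insert_product_insert [DecidableEq α] [DecidableEq β] (a : α) (b : β) (s : Finset α)
    (t : Finset β) :
    insert a s ×ˢ insert b t = insert (a, b) (s ×ˢ insert b t ∪ insert a s ×ˢ t) := by
  ext ⟨x, y⟩
  simp only [Finset.mem_product, Finset.mem_insert, Finset.mem_union, Prod.mk.injEq]
  tauto

lemma incompRel_of_mem_sdiff_product_insert [Preorder α] [Preorder β] [DecidableEq α]
    [DecidableEq β] {a : α} {b : β} {s : Finset α} {t : Finset β} (ha : ∀ x ∈ s, x < a)
    (hb : ∀ y ∈ t, y < b) {p q : α × β} (hp : p ∈ (s ×ˢ insert b t) \ (insert a s ×ˢ t))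
    (hq : q ∈ (insert a s ×ˢ t) \ (s ×ˢ insert b t)) : IncompRel (· ≤ ·) p q := by
  simp only [Finset.mem_sdiff, Finset.mem_product, Finset.mem_insert] at hp hq
  obtain ⟨hp₁, hp₂⟩ : p.1 ∈ s ∧ p.2 = b := by tauto
  obtain ⟨hq₁, hq₂⟩ : q.1 = a ∧ q.2 ∈ t := by tauto
  exact ⟨fun hpq => (hb _ hq₂).not_ge (hp₂ ▸ hpq.2), fun hqp => (ha _ hp₁).not_ge (hq₁ ▸ hqp.1)⟩

lemma card_chains_product_insert_insert_le [Preorder α] [Preorder β] [DecidableEq α]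
    [DecidableEq β] {a : α} {b : β} {s : Finset α} {t : Finset β} (ha : ∀ x ∈ s, x < a)
    (hb : ∀ y ∈ t, y < b) :
    #(chains (insert a s ×ˢ insert b t)) ≤
      2 * (#(chains (s ×ˢ insert b t)) + #(chains (insert a s ×ˢ t))) :=
  calc #(chains (insert a s ×ˢ insert b t))
    _ = #(chains (insert (a, b) (s ×ˢ insert b t ∪ insert a s ×ˢ t))) := by
        rw [insert_product_insert]
    _ ≤ 2 * #(chains (s ×ˢ insert b t ∪ insert a s ×ˢ t)) := card_chains_insert_le _ _
    _ ≤ 2 * #(chains (s ×ˢ insert b t) ∪ chains (insert a s ×ˢ t)) := by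
        gcongr
        exact chains_union_subset fun _ hp _ hq =>
          incompRel_of_mem_sdiff_product_insert ha hb hp hq
    _ ≤ 2 * (#(chains (s ×ˢ insert b t)) + #(chains (insert a s ×ˢ t))) := by
        gcongr
        exact Finset.card_union_le _ _

theorem card_chains_product_le [LinearOrder α] [LinearOrder β] (s : Finset α) (t : Finset β) :
    #(chains (s ×ˢ t)) ≤ 2 ^ (#s + #t) * (#s + #t).choose #s := by
  induction s using Finset.induction_on_max generalizing t with
  | empty => simp [chains_empty, Nat.one_le_two_pow]
  | insert a s ha ihs =>
    induction t using Finset.induction_on_max with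
    | empty => simp [chains_empty, Nat.one_le_two_pow]
    | insert b t hb iht =>
      have hs : #(insert a s) = #s + 1 := Finset.card_insert_of_notMem fun h => (ha a h).false
      have ht : #(insert b t) = #t + 1 := Finset.card_insert_of_notMem fun h => (hb b h).false
      have ihs' := ihs (insert b t)
      rw [ht, ← add_assoc] at ihs'
      rw [hs, add_right_comm] at iht
      calc #(chains (insert a s ×ˢ insert b t))
        _ ≤ 2 * (#(chains (s ×ˢ insert b t)) + #(chains (insert a s ×ˢ t))) :=
            card_chains_product_insert_insert_le ha hb
        _ ≤ 2 * (2 ^ (#s + #t + 1) * (#s + #t + 1).choose #s +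
              2 ^ (#s + #t + 1) * (#s + #t + 1).choose (#s + 1)) := by gcongr
        _ = 2 ^ (#s + #t + 2) * (#s + #t + 2).choose (#s + 1) := by
            rw [Nat.choose_succ_succ' (#s + #t + 1)]
            ring
        _ = 2 ^ (#(insert a s) + #(insert b t)) *
              (#(insert a s) + #(insert b t)).choose #(insert a s) := by
            rw [hs, ht, add_add_add_comm]

end Grid

lemma nested_iff_incompRel {e f : ℕ × ℕ} : Nested e f ↔ IncompRel (· ≤ ·) e f := by
  simp only [Nested, IncompRel, Prod.le_def]
  omega

lemma IsQueue.isChain {E : Finset (ℕ × ℕ)} (hE : IsQueue E) :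
    IsChain (· ≤ ·) (E : Set (ℕ × ℕ)) := by
  intro e he f hf _
  by_contra! h
  exact hE e he f hf (nested_iff_incompRel.2 h)

lemma IsOrderedGraph.subset_product {n : ℕ} {E : Finset (ℕ × ℕ)} (hE : IsOrderedGraph n E) :
    E ⊆ Finset.Icc 1 n ×ˢ Finset.Icc 1 n := by
  intro e he
  have := hE e he
  simp only [Finset.mem_product, Finset.mem_Icc]
  omega

lemma queueCount_le_card_chains (n : ℕ) :
    queueCount n ≤ #(chains (Finset.Icc 1 n ×ˢ Finset.Icc 1 n)) := by
  rw [← Set.ncard_coe_finset]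
  exact Set.ncard_le_ncard fun E hE => mem_chains.2 ⟨hE.1.subset_product, hE.2.isChain⟩

theorem queueCount_le_pow_general (n : ℕ) : queueCount n ≤ 16 ^ n :=
  calc queueCount n
    _ ≤ #(chains (Finset.Icc 1 n ×ˢ Finset.Icc 1 n)) := queueCount_le_card_chains n
    _ ≤ 2 ^ (n + n) * (n + n).choose n := by
        simpa using card_chains_product_le (Finset.Icc 1 n) (Finset.Icc 1 n)
    _ ≤ 2 ^ (n + n) * 2 ^ (n + n) := by gcongr; exact Nat.choose_le_two_pow _ _
    _ = 16 ^ n := by rw [← mul_pow, ← two_mul, pow_mul]; norm_num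

/-- The number `g(n)` of queues on the vertex set `{1, …, n}` satisfies
`g(n) ≤ c ^ n` for the absolute constant `c = 121 = 11 ^ 2`,
i.e. `g(n) ≤ 11 ^ (2 * n)`. -/
theorem queueCount_le_pow (n : ℕ) (hn : 0 < n) :
    queueCount n ≤ 121 ^ n :=
  (queueCount_le_pow_general n).trans (Nat.pow_le_pow_left (by norm_num) n)
end
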